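/- Let n, l ≥ 1, 1 ≤ p,q ≤ n, and r ≥ 1. Then in U(Q(n))^{⊗l}: U^{⊗l}∘Δ_l^{op}(T_{q,p}^{(r)}) equals (−1)^r times the even component, and U^{⊗l}∘Δ_l^{op}(T_{−q,p}^{(r)}) equals (−1)^r times the odd component, of the sum over all 1 ≤ p_1,…,p_{r−1} ≤ n and all l ≥ i_1 ≥ i_2 ≥ … ≥ i_r ≥ 1 of the ordered products Π_{a=1}^{r} (x^{i_a}_{p_{a−1}, p_a} + (−1)^{r−a} ξ^{i_a}_{p_{a−1}, p_a}), where p_0 := p and p_r := q. -/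

import Mathlib

noncomputable section
open scoped Classical

/-! # The universal enveloping superalgebra `U(Q(n))` of the queer Lie superalgebra

`U(Q(n))` is presented by even generators `e i j` and odd generators `f i j`
(`1 ≤ i,j ≤ n`) subject to the relations
`[e i j, e k l] = δ_{jk} e i l - δ_{li} e k j`,
`[e i j, f k l] = δ_{jk} f i l - δ_{li} f k j`,
`f i j * f k l + f k l * f i j = δ_{jk} e i l + δ_{li} e k j`. -/

/-- Generators of `U(Q(n))`: `E i j` (even) and `F i j` (odd). -/
inductive QGen (n : ℕ) : Type
  | E : Fin n → Fin n → QGen n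
  | F : Fin n → Fin n → QGen n

/-- Kronecker delta. -/
def kd {n : ℕ} (i j : Fin n) : ℂ := if i = j then 1 else 0

/-- The defining relations of `U(Q(n))`. -/
inductive QRel (n : ℕ) : FreeAlgebra ℂ (QGen n) → FreeAlgebra ℂ (QGen n) → Prop
  | ee (i j k l : Fin n) : QRel n
      (FreeAlgebra.ι ℂ (QGen.E i j) * FreeAlgebra.ι ℂ (QGen.E k l) -
        FreeAlgebra.ι ℂ (QGen.E k l) * FreeAlgebra.ι ℂ (QGen.E i j))
      (kd j k • FreeAlgebra.ι ℂ (QGen.E i l) - kd l i • FreeAlgebra.ι ℂ (QGen.E k j))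
  | ef (i j k l : Fin n) : QRel n
      (FreeAlgebra.ι ℂ (QGen.E i j) * FreeAlgebra.ι ℂ (QGen.F k l) -
        FreeAlgebra.ι ℂ (QGen.F k l) * FreeAlgebra.ι ℂ (QGen.E i j))
      (kd j k • FreeAlgebra.ι ℂ (QGen.F i l) - kd l i • FreeAlgebra.ι ℂ (QGen.F k j))
  | ff (i j k l : Fin n) : QRel n
      (FreeAlgebra.ι ℂ (QGen.F i j) * FreeAlgebra.ι ℂ (QGen.F k l) +
        FreeAlgebra.ι ℂ (QGen.F k l) * FreeAlgebra.ι ℂ (QGen.F i j))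
      (kd j k • FreeAlgebra.ι ℂ (QGen.E i l) + kd l i • FreeAlgebra.ι ℂ (QGen.E k j))

/-- The universal enveloping superalgebra `U(Q(n))`. -/
abbrev UQ (n : ℕ) := RingQuot (QRel n)

/-- The generator `e i j` of `U(Q(n))`. -/
def Ue {n : ℕ} (i j : Fin n) : UQ n :=
  RingQuot.mkAlgHom ℂ (QRel n) (FreeAlgebra.ι ℂ (QGen.E i j))

/-- The generator `f i j` of `U(Q(n))`. -/
def Uf {n : ℕ} (i j : Fin n) : UQ n :=
  RingQuot.mkAlgHom ℂ (QRel n) (FreeAlgebra.ι ℂ (QGen.F i j))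

/-- Sergeev's elements `e_{ij}^{(m)}` and `f_{ij}^{(m)}` of `U(Q(n))`, defined recursively by
`e^{(0)} = δ`, `f^{(0)} = 0`,
`e_{ij}^{(m)} = Σ_k e_{ik} e_{kj}^{(m-1)} + (-1)^{m+1} Σ_k f_{ik} f_{kj}^{(m-1)}`,
`f_{ij}^{(m)} = Σ_k e_{ik} f_{kj}^{(m-1)} + (-1)^{m+1} Σ_k f_{ik} e_{kj}^{(m-1)}`. -/
def efU (n : ℕ) : ℕ → (Fin n → Fin n → UQ n) × (Fin n → Fin n → UQ n)
  | 0 => (fun i j => algebraMap ℂ (UQ n) (kd i j), fun _ _ => 0)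
  | m + 1 =>
      (fun i j => (∑ k, Ue i k * (efU n m).1 k j) +
        (-1 : ℂ) ^ m • ∑ k, Uf i k * (efU n m).2 k j,
       fun i j => (∑ k, Ue i k * (efU n m).2 k j) +
        (-1 : ℂ) ^ m • ∑ k, Uf i k * (efU n m).1 k j)

/-- `e_{ij}^{(m)}`. -/
def eU {n : ℕ} (m : ℕ) (i j : Fin n) : UQ n := (efU n m).1 i j
/-- `f_{ij}^{(m)}`. -/
def fU {n : ℕ} (m : ℕ) (i j : Fin n) : UQ n := (efU n m).2 i j

/-- For `l ∣ n`, the index `l(p-1)+i` of `{1,…,n}` (0-based: block `p`, position `i`). -/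
def bidx {n l : ℕ} (h : l ∣ n) (p : Fin (n / l)) (i : Fin l) : Fin n :=
  ⟨l * p.val + i.val, by
    have h1 : i.val < l := i.isLt
    have h2 : p.val + 1 ≤ n / l := p.isLt
    have h3 : l * (p.val + 1) ≤ l * (n / l) := Nat.mul_le_mul_left l h2
    have h4 : n / l * l ≤ n := Nat.div_mul_le_self n l
    have h5 : l * (p.val + 1) = l * p.val + l := Nat.mul_succ l p.val
    have h6 : l * (n / l) = n / l * l := Nat.mul_comm l (n / l)
    omega⟩

/-! # The character `χ`, the left ideal `I_χ` and the finite W-algebra data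

Here `l ∣ n` and `χ` corresponds to the even nilpotent element of `Q(n)` all of whose
Jordan blocks have size `l`.  The subalgebra `m = ⊕_{j<0} g_j` is spanned by the
elements `e_{l(p-1)+i+k, l(q-1)+i}` and `f_{l(p-1)+i+k, l(q-1)+i}` (`k ≥ 1`), and
`χ(e_{l(p-1)+i+1, l(q-1)+i}) = δ_{pq}` and `χ = 0` on the other basis elements. -/

/-- The set of elements `a - χ(a)` for `a` ranging over the standard basis of `m`;
(rows/columns written 0-based: `a` is the position of the row inside its block `p`,
`b` the position of the column inside its block `q`, with `b < a`). -/
def mSet (n l : ℕ) (h : l ∣ n) : Set (UQ n) :=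
  { x : UQ n | ∃ (p q : Fin (n / l)) (a b : Fin l), b.val < a.val ∧
      (x = Ue (bidx h p a) (bidx h q b) -
            algebraMap ℂ (UQ n) (if a.val = b.val + 1 ∧ p = q then 1 else 0) ∨
       x = Uf (bidx h p a) (bidx h q b)) }

/-- The left ideal `I_χ` of `U(Q(n))` generated by the `a - χ(a)`, `a ∈ m`. -/
def Ichi (n l : ℕ) (h : l ∣ n) : Submodule (UQ n) (UQ n) :=
  Submodule.span (UQ n) (mSet n l h)

/-- The quotient `U(Q(n))/I_χ` (as a `ℂ`-vector space). -/
abbrev Wq (n l : ℕ) (h : l ∣ n) := UQ n ⧸ (Ichi n l h).restrictScalars ℂ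

/-- The quotient map `π : U(Q(n)) → U(Q(n))/I_χ`. -/
def piq (n l : ℕ) (h : l ∣ n) : UQ n →ₗ[ℂ] Wq n l h :=
  ((Ichi n l h).restrictScalars ℂ).mkQ

/-- `y` super-commutes with `m` into `I_χ`:  `[a, y] ∈ I_χ` for every `a` in the standard
basis of `m`.  Here the super-commutator of the odd element `f` with (the possibly
non-homogeneous) `y` is `f * y - σ(y) * f`, where `σ` is the parity involution of
`U(Q(n))` (the algebra automorphism fixing the `e`'s and negating the `f`'s). -/
def Wcond {n l : ℕ} (h : l ∣ n) (σ : UQ n →ₐ[ℂ] UQ n) (y : UQ n) : Prop :=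
  ∀ (p q : Fin (n / l)) (a b : Fin l), b.val < a.val →
    (Ue (bidx h p a) (bidx h q b) * y - y * Ue (bidx h p a) (bidx h q b) ∈ Ichi n l h) ∧
    (Uf (bidx h p a) (bidx h q b) * y - σ y * Uf (bidx h p a) (bidx h q b) ∈ Ichi n l h)

/-- The finite W-algebra `W_χ = {π(y) | [a, y] ∈ I_χ for all a ∈ m}`, as a subset of
`U(Q(n))/I_χ`.  (Its product is `π(y₁)·π(y₂) = π(y₁y₂)`.) -/
def WchiSet (n l : ℕ) (h : l ∣ n) (σ : UQ n →ₐ[ℂ] UQ n) : Set (Wq n l h) :=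
  { w : Wq n l h | ∃ y : UQ n, Wcond h σ y ∧ piq n l h y = w }

/-- The standard basis elements of the parabolic subalgebra `p = ⊕_{j≥0} g_j`. -/
def pSet (n l : ℕ) (h : l ∣ n) : Set (UQ n) :=
  { x : UQ n | ∃ (p q : Fin (n / l)) (a b : Fin l), a.val ≤ b.val ∧
      (x = Ue (bidx h p a) (bidx h q b) ∨ x = Uf (bidx h p a) (bidx h q b)) }

/-- The standard basis elements of the nilradical `n = ⊕_{j>0} g_j` of `p`. -/
def nSet (n l : ℕ) (h : l ∣ n) : Set (UQ n) :=
  { x : UQ n | ∃ (p q : Fin (n / l)) (a b : Fin l), a.val < b.val ∧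
      (x = Ue (bidx h p a) (bidx h q b) ∨ x = Uf (bidx h p a) (bidx h q b)) }

/-- The kernel of the Harish-Chandra projection `ϑ : U(p) → U(g₀)`, realized inside
`U(Q(n))`: the `ℂ`-span of `U(p)·n`.  (By the PBW theorem, `U(g) = U(p) ⊕ I_χ` and
`U(p) = U(g₀) ⊕ U(p)n`, so for `y ∈ U(g)`, `ϑ(pr(y)) = t` iff
`y - t ∈ I_χ + U(p)n`.) -/
def Lspan (n l : ℕ) (h : l ∣ n) : Submodule ℂ (UQ n) :=
  Submodule.span ℂ
    { x : UQ n | ∃ u ∈ Algebra.adjoin ℂ (pSet n l h), ∃ g ∈ nSet n l h, x = u * g }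

/-- A descriptor of a generator of `U(p)`:  `(b, p, q, a, c)` is
`e_{l(p-1)+(a+1), l(q-1)+(c+1)}` if `b = false` and `f_{…}` if `b = true`
(required: `a ≤ c`). -/
def pgElem {n l : ℕ} (h : l ∣ n) :
    Bool × Fin (n / l) × Fin (n / l) × Fin l × Fin l → UQ n
  | (b, p, q, a, c) => (if b then Uf else Ue) (bidx h p a) (bidx h q c)

/-- Kazhdan degree `2k+2` of a `p`-generator of block offset `k = c - a`. -/
def pgDeg {l m : ℕ} (d : Bool × Fin m × Fin m × Fin l × Fin l) : ℕ :=
  2 * (d.2.2.2.2.val - d.2.2.2.1.val) + 2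

/-- Weight `2k` of a `p`-generator of block offset `k = c - a`. -/
def pgWt {l m : ℕ} (d : Bool × Fin m × Fin m × Fin l × Fin l) : ℕ :=
  2 * (d.2.2.2.2.val - d.2.2.2.1.val)

/-- Monomials in the generators of `U(p)` which are "lower" than bidegree
(Kazhdan degree `D`, weight `W`): either of Kazhdan degree `< D`, or of Kazhdan
degree `≤ D` and weight `< W`. -/
def LowSet (n l : ℕ) (h : l ∣ n) (D W : ℕ) : Set (UQ n) :=
  { x : UQ n | ∃ L : List (Bool × Fin (n / l) × Fin (n / l) × Fin l × Fin l),
      (∀ d ∈ L, d.2.2.2.1.val ≤ d.2.2.2.2.val) ∧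
      x = (L.map (pgElem h)).prod ∧
      ((L.map pgDeg).sum < D ∨ ((L.map pgDeg).sum ≤ D ∧ (L.map pgWt).sum < W)) }

/-- The span of the "lower" monomials. -/
def LowSpan (n l : ℕ) (h : l ∣ n) (D W : ℕ) : Submodule ℂ (UQ n) :=
  Submodule.span ℂ (LowSet n l h D W)

/-! # The super tensor power `U(Q(m))^{⊗l}`

Modeled as the superalgebra with generators `x^i_{pq} = 1^{⊗(l-i)} ⊗ e_{pq} ⊗ 1^{⊗(i-1)}`
(even) and `ξ^i_{pq} = 1^{⊗(l-i)} ⊗ f_{pq} ⊗ 1^{⊗(i-1)}` (odd), subject to the `U(Q(m))`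
relations in each tensor slot and to (super-)commutation between different slots. -/

/-- Generators of `U(Q(m))^{⊗l}`: `X i p q` is `x^i_{pq}` and `Xi i p q` is `ξ^i_{pq}`
(`i : Fin l` is the 0-based tensor slot, counted from the right). -/
inductive TGen (m l : ℕ) : Type
  | X : Fin l → Fin m → Fin m → TGen m l
  | Xi : Fin l → Fin m → Fin m → TGen m l

/-- Kronecker delta on slots. -/
def kdl {l : ℕ} (i j : Fin l) : ℂ := if i = j then 1 else 0

/-- The defining relations of `U(Q(m))^{⊗l}`. -/
inductive TRel (m l : ℕ) : FreeAlgebra ℂ (TGen m l) → FreeAlgebra ℂ (TGen m l) → Prop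
  | xx (i i' : Fin l) (p q r s : Fin m) : TRel m l
      (FreeAlgebra.ι ℂ (TGen.X i p q) * FreeAlgebra.ι ℂ (TGen.X i' r s) -
        FreeAlgebra.ι ℂ (TGen.X i' r s) * FreeAlgebra.ι ℂ (TGen.X i p q))
      ((kdl i i' * kd q r) • FreeAlgebra.ι ℂ (TGen.X i p s) -
        (kdl i i' * kd s p) • FreeAlgebra.ι ℂ (TGen.X i' r q))
  | xxi (i i' : Fin l) (p q r s : Fin m) : TRel m l
      (FreeAlgebra.ι ℂ (TGen.X i p q) * FreeAlgebra.ι ℂ (TGen.Xi i' r s) -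
        FreeAlgebra.ι ℂ (TGen.Xi i' r s) * FreeAlgebra.ι ℂ (TGen.X i p q))
      ((kdl i i' * kd q r) • FreeAlgebra.ι ℂ (TGen.Xi i p s) -
        (kdl i i' * kd s p) • FreeAlgebra.ι ℂ (TGen.Xi i' r q))
  | xixi (i i' : Fin l) (p q r s : Fin m) : TRel m l
      (FreeAlgebra.ι ℂ (TGen.Xi i p q) * FreeAlgebra.ι ℂ (TGen.Xi i' r s) +
        FreeAlgebra.ι ℂ (TGen.Xi i' r s) * FreeAlgebra.ι ℂ (TGen.Xi i p q))
      ((kdl i i' * kd q r) • FreeAlgebra.ι ℂ (TGen.X i p s) +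
        (kdl i i' * kd s p) • FreeAlgebra.ι ℂ (TGen.X i' r q))

/-- The superalgebra `U(Q(m))^{⊗l}`. -/
abbrev TQ (m l : ℕ) := RingQuot (TRel m l)

/-- `x^i_{pq} := 1^{⊗(l-i)} ⊗ e_{pq} ⊗ 1^{⊗(i-1)} ∈ U(Q(m))^{⊗l}`. -/
def xT {m l : ℕ} (i : Fin l) (p q : Fin m) : TQ m l :=
  RingQuot.mkAlgHom ℂ (TRel m l) (FreeAlgebra.ι ℂ (TGen.X i p q))

/-- `ξ^i_{pq} := 1^{⊗(l-i)} ⊗ f_{pq} ⊗ 1^{⊗(i-1)} ∈ U(Q(m))^{⊗l}`. -/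
def xiT {m l : ℕ} (i : Fin l) (p q : Fin m) : TQ m l :=
  RingQuot.mkAlgHom ℂ (TRel m l) (FreeAlgebra.ι ℂ (TGen.Xi i p q))

/-! # The super-Yangian `Y(Q(n))` -/

/-- The index set `{±1, …, ±n}`:  `(false, a)` is the positive index `a` (even),
`(true, a)` is the negative index `-a` (odd). -/
abbrev QIdx (n : ℕ) := Bool × Fin n

/-- Negation `i ↦ -i` on indices. -/
def qneg {n : ℕ} (i : QIdx n) : QIdx n := (!i.1, i.2)

/-- The parity `p(i)`: `0` for positive `i`, `1` for negative `i`. -/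
def qpar {n : ℕ} (i : QIdx n) : ℕ := if i.1 then 1 else 0

/-- Kronecker delta on `{±1, …, ±n}`. -/
def kdq {n : ℕ} (i j : QIdx n) : ℂ := if i = j then 1 else 0

/-- Generators of `Y(Q(n))`: `T m i j` encodes `T^{(m+1)}_{i,j}`. -/
inductive YGen (n : ℕ) : Type
  | T : ℕ → QIdx n → QIdx n → YGen n

/-- `T^{(m)}_{i,j}` in the free algebra, with `T^{(0)}_{i,j} = δ_{ij}`. -/
def Tf {n : ℕ} : ℕ → QIdx n → QIdx n → FreeAlgebra ℂ (YGen n)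
  | 0, i, j => algebraMap ℂ _ (kdq i j)
  | m + 1, i, j => FreeAlgebra.ι ℂ (YGen.T m i j)

/-- The super-commutator `[T^{(a)}_{i,j}, T^{(b)}_{k,l}]` in the free algebra. -/
def ybr {n : ℕ} (a : ℕ) (i j : QIdx n) (b : ℕ) (k l : QIdx n) :
    FreeAlgebra ℂ (YGen n) :=
  Tf a i j * Tf b k l -
    ((-1 : ℂ) ^ ((qpar i + qpar j) * (qpar k + qpar l))) • (Tf b k l * Tf a i j)

/-- The defining relations of the super-Yangian `Y(Q(n))`: for `M, R ≥ 1`,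
`(-1)^{p(i)p(k)+p(i)p(l)+p(k)p(l)} ([T^{(M+1)}_{ij}, T^{(R-1)}_{kl}] - [T^{(M-1)}_{ij}, T^{(R+1)}_{kl}])
 = T^{(M)}_{kj}T^{(R-1)}_{il} + T^{(M-1)}_{kj}T^{(R)}_{il} - T^{(R-1)}_{kj}T^{(M)}_{il}
   - T^{(R)}_{kj}T^{(M-1)}_{il}
   + (-1)^{p(k)+p(l)} (-T^{(M)}_{-k,j}T^{(R-1)}_{-i,l} + T^{(M-1)}_{-k,j}T^{(R)}_{-i,l}
       + T^{(R-1)}_{k,-j}T^{(M)}_{i,-l} - T^{(R)}_{k,-j}T^{(M-1)}_{i,-l})`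
(here `M = m+1`, `R = r+1`), together with `T^{(m)}_{-i,-j} = (-1)^m T^{(m)}_{i,j}`. -/
inductive YRel (n : ℕ) : FreeAlgebra ℂ (YGen n) → FreeAlgebra ℂ (YGen n) → Prop
  | quad (m r : ℕ) (i j k l : QIdx n) : YRel n
      (((-1 : ℂ) ^ (qpar i * qpar k + qpar i * qpar l + qpar k * qpar l)) •
        (ybr (m + 2) i j r k l - ybr m i j (r + 2) k l))
      (Tf (m + 1) k j * Tf r i l + Tf m k j * Tf (r + 1) i l -
        Tf r k j * Tf (m + 1) i l - Tf (r + 1) k j * Tf m i l +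
        ((-1 : ℂ) ^ (qpar k + qpar l)) •
          (-(Tf (m + 1) (qneg k) j * Tf r (qneg i) l) +
            Tf m (qneg k) j * Tf (r + 1) (qneg i) l +
            Tf r k (qneg j) * Tf (m + 1) i (qneg l) -
            Tf (r + 1) k (qneg j) * Tf m i (qneg l)))
  | par (m : ℕ) (i j : QIdx n) : YRel n
      (Tf (m + 1) (qneg i) (qneg j)) (((-1 : ℂ) ^ (m + 1)) • Tf (m + 1) i j)

/-- The super-Yangian `Y(Q(n))`. -/
abbrev YQ (n : ℕ) := RingQuot (YRel n)

/-- The generator `T^{(m)}_{i,j}` of `Y(Q(n))` (with `T^{(0)}_{i,j} = δ_{ij}`). -/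
def TY {n : ℕ} (m : ℕ) (i j : QIdx n) : YQ n :=
  RingQuot.mkAlgHom ℂ (YRel n) (Tf m i j)

/-! # Values of the homomorphisms `U`, `ev`, `ēv` on the generators of `Y(Q(n))`,
and the explicit sums appearing in the main theorems. -/

/-- The value of the homomorphism `U : Y(Q(n)) → U(Q(n))` on the generator
`T^{(r)}_{i,j}`:  `U(T^{(r)}_{i,j}) = (-1)^r e^{(r)}_{j,i}`,
`U(T^{(r)}_{-i,j}) = (-1)^r f^{(r)}_{j,i}` for `i, j > 0`, and the values on the other
generators are forced by `T^{(r)}_{-i,-j} = (-1)^r T^{(r)}_{i,j}`. -/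
def Uval {n : ℕ} (r : ℕ) (i j : QIdx n) : UQ n :=
  (if j.1 then (-1 : ℂ) ^ r else 1) •
    ((-1 : ℂ) ^ r • (if xor i.1 j.1 then fU r j.2 i.2 else eU r j.2 i.2))

/-- The value of the evaluation homomorphism `ev : Y(Q(n)) → U(Q(n))` on `T^{(r)}_{i,j}`:
`ev(T^{(1)}_{i,j}) = -e_{j,i}`, `ev(T^{(1)}_{-i,j}) = -f_{j,i}` for `i, j > 0`,
`ev(T^{(0)}_{i,j}) = δ_{ij}` and `ev(T^{(r)}_{i,j}) = 0` for `r > 1` (with the values on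
the remaining generators forced by `T^{(r)}_{-i,-j} = (-1)^r T^{(r)}_{i,j}`). -/
def evval {n : ℕ} (r : ℕ) (i j : QIdx n) : UQ n :=
  (if j.1 then (-1 : ℂ) ^ r else 1) •
    (match r with
      | 0 => if xor i.1 j.1 then 0 else algebraMap ℂ (UQ n) (kd i.2 j.2)
      | 1 => -(if xor i.1 j.1 then Uf j.2 i.2 else Ue j.2 i.2)
      | _ + 2 => 0)

/-- The value of `ēv = α ∘ ev : Y(Q(n)) → U(Q(n))` on `T^{(r)}_{i,j}`, where `α` is the
principal anti-automorphism of `U(Q(n))`:  `ēv(T^{(1)}_{i,j}) = e_{j,i}`,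
`ēv(T^{(1)}_{-i,j}) = f_{j,i}` for `i, j > 0`, `ēv(T^{(0)}_{i,j}) = δ_{ij}`,
`ēv(T^{(r)}_{i,j}) = 0` for `r > 1`. -/
def bevval {n : ℕ} (r : ℕ) (i j : QIdx n) : UQ n :=
  (if j.1 then (-1 : ℂ) ^ r else 1) •
    (match r with
      | 0 => if xor i.1 j.1 then 0 else algebraMap ℂ (UQ n) (kd i.2 j.2)
      | 1 => (if xor i.1 j.1 then Uf j.2 i.2 else Ue j.2 i.2)
      | _ + 2 => 0)

/-- The sum `Σ_{p_1,…,p_{r-1}} Σ_{l ≥ i_1 ≥ i_2 ≥ … ≥ i_r ≥ 1}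
Π_{a=1}^r (x^{i_a}_{p_{a-1},p_a} + (-1)^{r-a} ξ^{i_a}_{p_{a-1},p_a})`
(with `p_0 = p`, `p_r = q`), an element of `U(Q(m))^{⊗l}`. -/
def chainProdDec (m l : ℕ) (r : ℕ) (p q : Fin m) : TQ m l :=
  ∑ c : Fin (r + 1) → Fin m, ∑ iv : Fin r → Fin l,
    (if c 0 = p ∧ c (Fin.last r) = q ∧ (∀ a b : Fin r, a ≤ b → iv b ≤ iv a)
      then (1 : ℂ) else 0) •
      (List.ofFn fun a : Fin r =>
        xT (iv a) (c a.castSucc) (c a.succ) +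
          ((-1 : ℂ) ^ (r - 1 - a.val)) • xiT (iv a) (c a.castSucc) (c a.succ)).prod

/-- The sum `Σ_{p_1,…,p_{r-1}} Σ_{1 ≤ i_1 < i_2 < … < i_r ≤ l}
Π_{a=1}^r (x^{i_a}_{p_{a-1},p_a} + (-1)^{r-a} ξ^{i_a}_{p_{a-1},p_a})`
(with `p_0 = p`, `p_r = q`), an element of `U(Q(m))^{⊗l}`. -/
def chainProdInc (m l : ℕ) (r : ℕ) (p q : Fin m) : TQ m l :=
  ∑ c : Fin (r + 1) → Fin m, ∑ iv : Fin r → Fin l,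
    (if c 0 = p ∧ c (Fin.last r) = q ∧ (∀ a b : Fin r, a < b → iv a < iv b)
      then (1 : ℂ) else 0) •
      (List.ofFn fun a : Fin r =>
        xT (iv a) (c a.castSucc) (c a.succ) +
          ((-1 : ℂ) ^ (r - 1 - a.val)) • xiT (iv a) (c a.castSucc) (c a.succ)).prod

/-- The elements `z^{(r)}_{±q,p}` of `U(Q(m))^{⊗l}`:  the even (`sgn = false`,
giving `z^{(r)}_{q,p}`) resp. odd (`sgn = true`, giving `z^{(r)}_{-q,p}`) component of
`chainProdDec`, computed using the parity involution `σT` of `U(Q(m))^{⊗l}`;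
`z^{(0)}_{q,p} = δ_{qp}`, `z^{(0)}_{-q,p} = 0`. -/
def zDec {m l : ℕ} (σT : TQ m l →ₐ[ℂ] TQ m l) :
    ℕ → Bool → Fin m → Fin m → TQ m l
  | 0, sgn, q, p => if sgn then 0 else algebraMap ℂ (TQ m l) (kd q p)
  | r + 1, sgn, q, p =>
      (2⁻¹ : ℂ) • (chainProdDec m l (r + 1) p q +
        (if sgn then (-1 : ℂ) else 1) • σT (chainProdDec m l (r + 1) p q))

/-- The elements `z̃^{(r)}_{±q,p}` of `U(Q(m))^{⊗l}` (as `zDec`, with increasing chains). -/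
def zInc {m l : ℕ} (σT : TQ m l →ₐ[ℂ] TQ m l) :
    ℕ → Bool → Fin m → Fin m → TQ m l
  | 0, sgn, q, p => if sgn then 0 else algebraMap ℂ (TQ m l) (kd q p)
  | r + 1, sgn, q, p =>
      (2⁻¹ : ℂ) • (chainProdInc m l (r + 1) p q +
        (if sgn then (-1 : ℂ) else 1) • σT (chainProdInc m l (r + 1) p q))

/-- The explicit formula for the antipode value `S(T^{(r)}_{i,j})` (`r ≥ 1`):
`S(T^{(r)}_{i,j}) = Σ_{m=1}^{r} (-1)^m Σ_{i_1,…,i_{m-1}} Σ_{r_1+⋯+r_m=r, r_a>0}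
(-1)^{ν(i,i_1,…,i_{m-1},j)} T^{(r_1)}_{i,i_1} ⋯ T^{(r_m)}_{i_{m-1},j}` where
`ν(i_0,…,i_m) = Σ_{0≤k<s≤m-1} (p(i_k)+p(i_{k+1}))(p(i_s)+p(i_{s+1}))`. -/
def STval {n : ℕ} (r : ℕ) (i j : QIdx n) : YQ n :=
  ∑ m : Fin r,
    ((-1 : ℂ) ^ (m.val + 1)) •
      ∑ ch : Fin (m.val + 2) → QIdx n, ∑ c : Fin (m.val + 1) → Fin (r + 1),
        (if ch 0 = i ∧ ch (Fin.last (m.val + 1)) = j ∧ (∀ a, 1 ≤ (c a).val) ∧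
              (∑ a, (c a).val) = r
          then ((-1 : ℂ) ^ (∑ a : Fin (m.val + 1), ∑ b : Fin (m.val + 1),
              if a < b then
                (qpar (ch a.castSucc) + qpar (ch a.succ)) *
                  (qpar (ch b.castSucc) + qpar (ch b.succ))
              else 0))
          else 0) •
        (List.ofFn fun a : Fin (m.val + 1) =>
          TY (c a).val (ch a.castSucc) (ch a.succ)).prod

/-! Write `T^ε(s)` for the matrix with `(p, q)` entry `(-1)^s (T^{(s)}_{q,p} + ε T^{(s)}_{-q,p})`,
where `ε = ±1`, and `D^ε(r)` for the matrix of chain sums with every `ξ` replaced by `ε ξ`.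
A chain either starts in the last slot `k`, in which case its first factor can be split off, or
avoids that slot altogether, so on `k + 1` slots
`D_{k+1}^ε(r+1) = (x^k + ε (-1)^r ξ^k) D_{k+1}^ε(r) + D_k^ε(r+1)`.
Sergeev's recursion and the opposite comultiplication give the images of `T^ε(s)` the same
recursion, so they agree with `D^ε`.  The parity involution exchanges `D^1` and `D^{-1}`; adding
and subtracting the two identities isolates the even and the odd component. -/

section AntitoneSum

/-- The sum over weakly decreasing sequences `i₁ ≥ ⋯ ≥ iᵣ` in `ι` of the ordered products
`y (r-1) i₁ * ⋯ * y 0 iᵣ`.  The exponent argument counts the factors to the right, so that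
splitting off the first factor leaves a sum of the same shape. -/
def antitoneSum {M ι : Type*} [Semiring M] [Fintype ι] [Preorder ι] (y : ℕ → ι → M) (r : ℕ) : M :=
  ∑ i : Fin r → ι with Antitone i, (List.ofFn fun a => y a.rev (i a)).prod

variable {M N ι : Type*} [Semiring M] [Semiring N] [Fintype ι] [Preorder ι] {k : ℕ}

lemma antitoneSum_zero (y : ℕ → ι → M) : antitoneSum y 0 = 1 := by
  simp [antitoneSum, Subsingleton.antitone]

lemma antitoneSum_succ_of_isEmpty [IsEmpty ι] (y : ℕ → ι → M) (r : ℕ) :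
    antitoneSum y (r + 1) = 0 := by
  simp [antitoneSum]

lemma map_antitoneSum (φ : M →+* N) (y : ℕ → ι → M) (r : ℕ) :
    φ (antitoneSum y r) = antitoneSum (fun e i => φ (y e i)) r := by
  simp only [antitoneSum, map_sum, map_list_prod, List.map_ofFn, Function.comp_def]

lemma antitone_cons_last {r : ℕ} {i : Fin r → Fin (k + 1)} :
    Antitone (Fin.cons (Fin.last k) i : Fin (r + 1) → Fin (k + 1)) ↔ Antitone i := by
  simp only [Antitone, Fin.forall_fin_succ, Fin.cons_zero, Fin.cons_succ, Fin.le_last,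
    Fin.succ_le_succ_iff]
  simp

lemma sum_antitone_head_eq_last (y : ℕ → Fin (k + 1) → M) (r : ℕ) :
    ∑ i : Fin (r + 1) → Fin (k + 1) with Antitone i ∧ i 0 = Fin.last k,
        (List.ofFn fun a => y a.rev (i a)).prod =
      y r (Fin.last k) * antitoneSum y r := by
  rw [antitoneSum, Finset.mul_sum]
  refine Finset.sum_nbij' Fin.tail (fun i => Fin.cons (Fin.last k) i) ?_ ?_ ?_ ?_ ?_
  · simp only [Finset.mem_filter_univ]
    exact fun i hi => hi.1.comp_monotone Fin.strictMono_succ.monotone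
  · simp [antitone_cons_last]
  · simp only [Finset.mem_filter_univ]
    rintro i ⟨-, hi⟩
    rw [← hi, Fin.cons_self_tail]
  · simp
  · simp only [Finset.mem_filter_univ]
    rintro i ⟨-, hi⟩
    simp [List.ofFn_succ, hi, Fin.tail]

lemma sum_antitone_head_ne_last (y : ℕ → Fin (k + 1) → M) (r : ℕ) :
    ∑ i : Fin (r + 1) → Fin (k + 1) with Antitone i ∧ i 0 ≠ Fin.last k,
        (List.ofFn fun a => y a.rev (i a)).prod =
      antitoneSum (fun e (i : Fin k) => y e i.castSucc) (r + 1) := by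
  symm
  refine Finset.sum_nbij (fun i => Fin.castSucc ∘ i) ?_ ?_ ?_ fun _ _ => rfl
  · simp only [Finset.mem_filter_univ]
    exact fun i hi => ⟨Fin.strictMono_castSucc.monotone.comp_antitone hi, Fin.castSucc_ne_last _⟩
  · exact (Fin.castSucc_injective k).comp_left.injOn
  · intro i hi
    obtain ⟨hanti, hhead⟩ : Antitone i ∧ i 0 ≠ Fin.last k := by simpa using hi
    have hne (a) : i a ≠ Fin.last k :=
      ((hanti (Fin.zero_le a)).trans_lt (Fin.lt_last_iff_ne_last.2 hhead)).ne
    choose j hj using fun a => Fin.exists_castSucc_eq.2 (hne a)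
    obtain rfl : Fin.castSucc ∘ j = i := funext hj
    have hj : Antitone j := fun _ _ hab => Fin.castSucc_le_castSucc_iff.1 (hanti hab)
    exact ⟨j, by simpa using hj, rfl⟩

lemma antitoneSum_succ (y : ℕ → Fin (k + 1) → M) (r : ℕ) :
    antitoneSum y (r + 1) = y r (Fin.last k) * antitoneSum y r +
      antitoneSum (fun e (i : Fin k) => y e i.castSucc) (r + 1) := by
  rw [← sum_antitone_head_eq_last, ← sum_antitone_head_ne_last, antitoneSum,
    ← Finset.sum_filter_add_sum_filter_not _ (fun i => i 0 = Fin.last k), Finset.filter_filter,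
    Finset.filter_filter]
  congr!

end AntitoneSum

lemma list_prod_ofFn_matrix_apply {m R : Type*} [Fintype m] [DecidableEq m] [Semiring R] {r : ℕ}
    (A : Fin r → Matrix m m R) (p q : m) :
    (List.ofFn A).prod p q = ∑ c : Fin (r + 1) → m,
      if c 0 = p ∧ c (Fin.last r) = q then
        (List.ofFn fun a => A a (c a.castSucc) (c a.succ)).prod else 0 := by
  induction r generalizing p with
  | zero =>
    rw [← (Equiv.funUnique (Fin 1) m).symm.sum_comp]
    simp [Matrix.one_apply, ite_and]
  | succ r ih =>
    rw [← (Fin.consEquiv fun _ => m).sum_comp, Fintype.sum_prod_type]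
    simp only [List.ofFn_succ, List.prod_cons, Matrix.mul_apply, ih, Finset.mul_sum, mul_ite,
      mul_zero]
    rw [Finset.sum_comm, Finset.sum_comm (s := Finset.univ (α := m))]
    refine Finset.sum_congr rfl fun c _ => ?_
    simp [Fin.consEquiv, ite_and, ← Fin.succ_last]

section ChainMatrix

variable {n k l : ℕ}

/-- The matrix `x^i + ε ξ^i` of twisted generators in the slot `i`. -/
def slotMatrix (ε : ℂ) (i : Fin l) : Matrix (Fin n) (Fin n) (TQ n l) :=
  Matrix.of fun p q => xT i p q + ε • xiT i p q

/-- The matrix of chain sums over decreasing slots, with each `ξ` replaced by `ε ξ`. -/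
def chainMatrix (n l : ℕ) (ε : ℂ) (r : ℕ) : Matrix (Fin n) (Fin n) (TQ n l) :=
  antitoneSum (fun e i => slotMatrix (ε * (-1) ^ e) i) r

lemma chainProdDec_eq_chainMatrix (r : ℕ) (p q : Fin n) :
    chainProdDec n l r p q = chainMatrix n l 1 r p q := by
  rw [chainMatrix, antitoneSum, Matrix.sum_apply, Finset.sum_filter, chainProdDec,
    Finset.sum_comm]
  refine Finset.sum_congr rfl fun i _ => ?_
  have hrev (a : Fin r) : (a.rev : ℕ) = r - 1 - a := by rw [Fin.val_rev]; omega
  have hanti : (∀ a b, a ≤ b → i b ≤ i a) ↔ Antitone i := Iff.rfl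
  by_cases hi : Antitone i
  · simp only [list_prod_ofFn_matrix_apply, hanti, hi, hrev, slotMatrix, Matrix.of_apply, and_true,
      if_true, one_mul, ite_smul, one_smul, zero_smul]
  · simp only [hanti, hi, and_false, if_false, zero_smul, Finset.sum_const_zero]

lemma mapMatrix_chainMatrix {φ : TQ n k →ₐ[ℂ] TQ n l} {slot : Fin k → Fin l} {δ : ℂ}
    (hx : ∀ a i j, φ (xT a i j) = xT (slot a) i j)
    (hxi : ∀ a i j, φ (xiT a i j) = δ • xiT (slot a) i j) (ε : ℂ) (r : ℕ) :
    φ.mapMatrix (chainMatrix n k ε r) =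
      antitoneSum (fun e a => slotMatrix (ε * δ * (-1) ^ e) (slot a)) r := by
  have hslot (η : ℂ) (a : Fin k) :
      φ.mapMatrix (slotMatrix η a : Matrix (Fin n) (Fin n) _) = slotMatrix (η * δ) (slot a) := by
    ext p q
    simp [slotMatrix, hx, hxi, smul_smul]
  refine (map_antitoneSum φ.mapMatrix.toRingHom _ r).trans ?_
  simp only [AlgHom.toRingHom_eq_coe, RingHom.coe_coe, hslot, mul_right_comm]

lemma mapMatrix_chainMatrix_neg {σ : TQ n l →ₐ[ℂ] TQ n l}
    (hx : ∀ a i j, σ (xT a i j) = xT a i j) (hxi : ∀ a i j, σ (xiT a i j) = -xiT a i j)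
    (ε : ℂ) (r : ℕ) :
    σ.mapMatrix (chainMatrix n l ε r) = chainMatrix n l (-ε) r := by
  rw [mapMatrix_chainMatrix (slot := id) (δ := -1) hx
    (fun a i j => (hxi a i j).trans (neg_one_smul ℂ _).symm), mul_neg_one]
  rfl

lemma chainMatrix_zero (ε : ℂ) : chainMatrix n l ε 0 = 1 :=
  antitoneSum_zero _

lemma chainMatrix_one_succ (ε : ℂ) (r : ℕ) :
    chainMatrix n 1 ε (r + 1) = slotMatrix (ε * (-1) ^ r) 0 * chainMatrix n 1 ε r := by
  rw [chainMatrix, antitoneSum_succ, antitoneSum_succ_of_isEmpty, add_zero]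
  rfl

lemma chainMatrix_succ {φ : TQ n k →ₐ[ℂ] TQ n (k + 1)}
    (hx : ∀ a i j, φ (xT a i j) = xT a.castSucc i j)
    (hxi : ∀ a i j, φ (xiT a i j) = xiT a.castSucc i j) (ε : ℂ) (r : ℕ) :
    chainMatrix n (k + 1) ε (r + 1) =
      slotMatrix (ε * (-1) ^ r) (Fin.last k) * chainMatrix n (k + 1) ε r +
        φ.mapMatrix (chainMatrix n k ε (r + 1)) := by
  rw [mapMatrix_chainMatrix (slot := Fin.castSucc) (δ := 1) hx (by simpa using hxi), mul_one]
  exact antitoneSum_succ _ r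

end ChainMatrix

section SergeevMatrix

variable {n : ℕ}

/-- The matrix `e + ε f` of twisted generators of `U(Q(n))`. -/
def generatorMatrix (n : ℕ) (ε : ℂ) : Matrix (Fin n) (Fin n) (UQ n) :=
  Matrix.of fun i j => Ue i j + ε • Uf i j

/-- The matrix `e^{(m)} + ε f^{(m)}` of Sergeev's elements of `U(Q(n))`. -/
def sergeevMatrix (n : ℕ) (ε : ℂ) (m : ℕ) : Matrix (Fin n) (Fin n) (UQ n) :=
  Matrix.of fun i j => eU m i j + ε • fU m i j

lemma sergeevMatrix_zero (ε : ℂ) : sergeevMatrix n ε 0 = 1 := by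
  ext i j
  by_cases h : i = j <;> simp [sergeevMatrix, eU, fU, efU, kd, Matrix.one_apply, h]

lemma sergeevMatrix_succ {ε : ℂ} (hε : ε * ε = 1) (m : ℕ) :
    sergeevMatrix n ε (m + 1) = generatorMatrix n (ε * (-1) ^ m) * sergeevMatrix n ε m := by
  ext i j
  have hsign : ε * (ε * (-1) ^ m) = (-1) ^ m := by rw [← mul_assoc, hε, one_mul]
  simp only [sergeevMatrix, generatorMatrix, eU, fU, efU, Matrix.of_apply, Matrix.mul_apply,
    add_mul, mul_add, smul_mul_assoc, mul_smul_comm, Finset.sum_add_distrib, ← Finset.smul_sum,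
    smul_add, smul_smul, hsign]
  module

lemma mapMatrix_generatorMatrix {l : ℕ} {φ : UQ n →ₐ[ℂ] TQ n l} {a : Fin l}
    (hx : ∀ i j, φ (Ue i j) = xT a i j) (hxi : ∀ i j, φ (Uf i j) = xiT a i j) (ε : ℂ) :
    φ.mapMatrix (generatorMatrix n ε) = slotMatrix ε a := by
  ext p q
  simp [generatorMatrix, slotMatrix, hx, hxi]

lemma mapMatrix_sergeevMatrix {φ : UQ n →ₐ[ℂ] TQ n 1}
    (hx : ∀ i j, φ (Ue i j) = xT 0 i j) (hxi : ∀ i j, φ (Uf i j) = xiT 0 i j) {ε : ℂ}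
    (hε : ε * ε = 1) (m : ℕ) :
    φ.mapMatrix (sergeevMatrix n ε m) = chainMatrix n 1 ε m := by
  induction m with
  | zero => rw [sergeevMatrix_zero, chainMatrix_zero, map_one]
  | succ m ih =>
    rw [sergeevMatrix_succ hε, map_mul, ih, mapMatrix_generatorMatrix hx hxi, chainMatrix_one_succ]

end SergeevMatrix

lemma neg_one_pow_mul_self {M : Type*} [Monoid M] [HasDistribNeg M] (s : ℕ) :
    (-1 : M) ^ s * (-1) ^ s = 1 :=
  pow_mul_pow_eq_one s (by rw [neg_one_mul, neg_neg])

section YangianMatrix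

variable {n : ℕ} {R : Type*} [Semiring R] [Algebra ℂ R]

/-- The matrix of generators `T^ε(s)` of `Y(Q(n))`; as in the definition of the homomorphism `U`,
rows and columns are transposed and the sign `(-1)^s` is split off. -/
def yangianMatrix (n : ℕ) (ε : ℂ) (s : ℕ) : Matrix (Fin n) (Fin n) (YQ n) :=
  Matrix.of fun p q => (-1 : ℂ) ^ s • (TY s (false, q) (false, p) + ε • TY s (true, q) (false, p))

lemma TY_zero (i j : QIdx n) : TY 0 i j = algebraMap ℂ (YQ n) (kdq i j) := by
  simp [TY, Tf]

lemma TY_true_right (s : ℕ) (b : Bool) (i j : Fin n) :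
    TY s (b, i) (true, j) = (-1 : ℂ) ^ s • TY s (!b, i) (false, j) := by
  cases s with
  | zero => cases b <;> simp [TY_zero, kdq]
  | succ s =>
    simpa [qneg, TY] using RingQuot.mkAlgHom_rel ℂ (YRel.par s (!b, i) ((false, j) : QIdx n))

lemma yangianMatrix_zero (ε : ℂ) : yangianMatrix n ε 0 = 1 := by
  ext p q
  by_cases h : p = q <;> simp [yangianMatrix, TY_zero, kdq, Matrix.one_apply, h, eq_comm (a := q)]

lemma Uval_false_false (s : ℕ) (i j : Fin n) :
    Uval s (false, i) (false, j) = (-1 : ℂ) ^ s • eU s j i := by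
  simp [Uval]

lemma Uval_true_false (s : ℕ) (i j : Fin n) :
    Uval s (true, i) (false, j) = (-1 : ℂ) ^ s • fU s j i := by
  simp [Uval]

lemma mapMatrix_yangianMatrix_of_Uval {φ : UQ n →ₐ[ℂ] R} {G : YQ n →ₐ[ℂ] R}
    (hG : ∀ s i j, G (TY s i j) = φ (Uval s i j)) (ε : ℂ) (s : ℕ) :
    G.mapMatrix (yangianMatrix n ε s) = φ.mapMatrix (sergeevMatrix n ε s) := by
  ext p q
  simp only [yangianMatrix, sergeevMatrix, AlgHom.mapMatrix_apply, Matrix.map_apply,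
    Matrix.of_apply, map_smul, map_add, hG, Uval_false_false, Uval_true_false, smul_add]
  simp only [smul_smul, mul_left_comm _ ε, neg_one_pow_mul_self, one_smul, mul_one]

section Coproduct

variable {φ : UQ n →ₐ[ℂ] R} {G H : YQ n →ₐ[ℂ] R} {ε : ℂ}

-- The twist by `(-1) ^ t` comes from `T_{i,-m}^{(t)} = (-1)^t T_{-i,m}^{(t)}`.
lemma mapMatrix_sergeevMatrix_mul_mapMatrix_yangianMatrix_apply (hε : ε * ε = 1) (d t : ℕ)
    (p q : Fin n) :
    (φ.mapMatrix (sergeevMatrix n (ε * (-1) ^ t) d) * H.mapMatrix (yangianMatrix n ε t)) p q =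
      (-1 : ℂ) ^ (d + t) • ∑ k, φ (Uval d k (false, p)) *
        (H (TY t (false, q) k) + ε • H (TY t (true, q) k)) := by
  have hd := neg_one_pow_mul_self (M := ℂ) d
  have ht := neg_one_pow_mul_self (M := ℂ) t
  simp only [sergeevMatrix, yangianMatrix, AlgHom.mapMatrix_apply, Matrix.mul_apply,
    Matrix.map_apply, Matrix.of_apply, map_smul, map_add, Fintype.sum_prod_type_right,
    Fintype.sum_bool, Finset.smul_sum]
  refine Finset.sum_congr rfl fun m _ => ?_
  simp only [Uval_false_false, Uval_true_false, TY_true_right, map_smul, Bool.not_true,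
    Bool.not_false, smul_mul_assoc, mul_smul_comm, mul_add, add_mul, smul_add, smul_smul, pow_add]
  generalize (-1 : ℂ) ^ d = a at *
  generalize (-1 : ℂ) ^ t = b at *
  match_scalars <;> grind

lemma mapMatrix_yangianMatrix_of_coproduct
    (hG : ∀ s i j, G (TY s i j) =
      ∑ t : Fin (s + 1), ∑ k, φ (Uval (s - t) k j) * H (TY t i k))
    (hε : ε * ε = 1) (s : ℕ) :
    G.mapMatrix (yangianMatrix n ε s) = ∑ t : Fin (s + 1),
      φ.mapMatrix (sergeevMatrix n (ε * (-1) ^ (t : ℕ)) (s - t)) *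
        H.mapMatrix (yangianMatrix n ε t) := by
  ext p q
  simp only [Matrix.sum_apply, mapMatrix_sergeevMatrix_mul_mapMatrix_yangianMatrix_apply hε,
    Nat.sub_add_cancel (Nat.lt_succ_iff.1 (Fin.isLt _)), ← Finset.smul_sum, mul_add,
    mul_smul_comm, Finset.sum_add_distrib, ← hG]
  simp [yangianMatrix]

lemma mapMatrix_yangianMatrix_succ
    (hG : ∀ s i j, G (TY s i j) =
      ∑ t : Fin (s + 1), ∑ k, φ (Uval (s - t) k j) * H (TY t i k))
    (hε : ε * ε = 1) (s : ℕ) :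
    G.mapMatrix (yangianMatrix n ε (s + 1)) =
      φ.mapMatrix (generatorMatrix n (ε * (-1) ^ s)) * G.mapMatrix (yangianMatrix n ε s) +
        H.mapMatrix (yangianMatrix n ε (s + 1)) := by
  rw [mapMatrix_yangianMatrix_of_coproduct hG hε, mapMatrix_yangianMatrix_of_coproduct hG hε,
    Fin.sum_univ_castSucc, Finset.mul_sum]
  congr 1
  · refine Finset.sum_congr rfl fun t _ => ?_
    have hεt : ε * (-1) ^ (t : ℕ) * (ε * (-1) ^ (t : ℕ)) = 1 := by
      rw [mul_mul_mul_comm, hε, neg_one_pow_mul_self, one_mul]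
    have hsign : ε * (-1) ^ (t : ℕ) * (-1) ^ (s - t) = ε * (-1) ^ s := by
      rw [mul_assoc, ← pow_add, Nat.add_sub_cancel' (Nat.lt_succ_iff.1 t.isLt)]
    rw [Fin.val_castSucc, Nat.succ_sub (Nat.lt_succ_iff.1 t.isLt), sergeevMatrix_succ hεt, hsign,
      map_mul, mul_assoc]
  · rw [Fin.val_last, Nat.sub_self, sergeevMatrix_zero, map_one, one_mul]

end Coproduct

lemma mapMatrix_yangianMatrix_eq_chainMatrix
    {emb : ∀ k : ℕ, Fin k → (UQ n →ₐ[ℂ] TQ n k)}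
    (hembx : ∀ k a i j, emb k a (Ue i j) = xT a i j)
    (hembxi : ∀ k a i j, emb k a (Uf i j) = xiT a i j)
    {ish : ∀ k : ℕ, TQ n k →ₐ[ℂ] TQ n (k + 1)}
    (hishx : ∀ k a i j, ish k (xT a i j) = xT a.castSucc i j)
    (hishxi : ∀ k a i j, ish k (xiT a i j) = xiT a.castSucc i j)
    {G : ∀ k : ℕ, YQ n →ₐ[ℂ] TQ n k}
    (hG1 : ∀ s i j, G 1 (TY s i j) = emb 1 0 (Uval s i j))
    (hGstep : ∀ k, 1 ≤ k → ∀ s i j, G (k + 1) (TY s i j) =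
      ∑ t : Fin (s + 1), ∑ m, emb (k + 1) (Fin.last k) (Uval (s - t) m j) *
        ish k (G k (TY t i m)))
    {ε : ℂ} (hε : ε * ε = 1) {k : ℕ} (hk : 1 ≤ k) (s : ℕ) :
    (G k).mapMatrix (yangianMatrix n ε s) = chainMatrix n k ε s := by
  induction k, hk using Nat.le_induction generalizing s with
  | base =>
    rw [mapMatrix_yangianMatrix_of_Uval hG1, mapMatrix_sergeevMatrix (hembx 1 0) (hembxi 1 0) hε]
  | succ k hk ih =>
    induction s with
    | zero => rw [yangianMatrix_zero, chainMatrix_zero, map_one]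
    | succ s ihs =>
      rw [mapMatrix_yangianMatrix_succ (H := (ish k).comp (G k)) (hGstep k hk) hε, ihs,
        mapMatrix_generatorMatrix (hembx _ _) (hembxi _ _),
        chainMatrix_succ (hishx k) (hishxi k), ← ih, ← AlgHom.comp_apply, AlgHom.mapMatrix_comp]

end YangianMatrix

/-- Let `n, l ≥ 1`, `1 ≤ p,q ≤ n` and `r ≥ 1`.  Then in
`U(Q(n))^{⊗l}`, `U^{⊗l}∘Δ_l^{op}(T^{(r)}_{q,p})` equals `(-1)^r` times the even component
of `Σ_{p_1,…,p_{r-1}} Σ_{l ≥ i_1 ≥ … ≥ i_r ≥ 1} Π_{a=1}^r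
(x^{i_a}_{p_{a-1},p_a} + (-1)^{r-a} ξ^{i_a}_{p_{a-1},p_a})` (`p_0 = p`, `p_r = q`), and
`U^{⊗l}∘Δ_l^{op}(T^{(r)}_{-q,p})` equals `(-1)^r` times its odd component.
Here `G k = U^{⊗k}∘Δ_k^{op} : Y(Q(n)) → U(Q(n))^{⊗k}` is characterized by its values on
the generators: `G 1 = U` and
`G (k+1) (T^{(s)}_{i,j}) = Σ_{t≤s} Σ_m (1^{⊗k} ⊗ U(T^{(s-t)}_{m,j})) · (Δ_k^{op}-part)`,
following `Δ^{op}(T^{(s)}_{i,j}) = Σ_t Σ_m T^{(s-t)}_{m,j} ⊗ T^{(t)}_{i,m}`;  `emb k a`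
is the embedding of `U(Q(n))` into the `a`-th tensor slot, `ish k` the slot-preserving
embedding `U(Q(n))^{⊗k} → U(Q(n))^{⊗(k+1)}`, and `σT` the parity involution. -/
theorem statement10 (n l : ℕ) (hn : 0 < n) (hl : 1 ≤ l) (p q : Fin n)
    (r : ℕ) (hr : 1 ≤ r)
    (σT : TQ n l →ₐ[ℂ] TQ n l)
    (hσTx : ∀ (a : Fin l) (i j : Fin n), σT (xT a i j) = xT a i j)
    (hσTxi : ∀ (a : Fin l) (i j : Fin n), σT (xiT a i j) = -xiT a i j)
    (emb : ∀ k : ℕ, Fin k → (UQ n →ₐ[ℂ] TQ n k))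
    (hembx : ∀ (k : ℕ) (a : Fin k) (i j : Fin n), emb k a (Ue i j) = xT a i j)
    (hembxi : ∀ (k : ℕ) (a : Fin k) (i j : Fin n), emb k a (Uf i j) = xiT a i j)
    (ish : ∀ k : ℕ, TQ n k →ₐ[ℂ] TQ n (k + 1))
    (hishx : ∀ (k : ℕ) (a : Fin k) (i j : Fin n), ish k (xT a i j) = xT a.castSucc i j)
    (hishxi : ∀ (k : ℕ) (a : Fin k) (i j : Fin n), ish k (xiT a i j) = xiT a.castSucc i j)
    (G : ∀ k : ℕ, YQ n →ₐ[ℂ] TQ n k)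
    (hG1 : ∀ (s : ℕ) (i j : QIdx n), G 1 (TY s i j) = emb 1 0 (Uval s i j))
    (hGstep : ∀ (k : ℕ), 1 ≤ k → ∀ (s : ℕ) (i j : QIdx n),
      G (k + 1) (TY s i j) =
        ∑ t : Fin (s + 1), ∑ kk : QIdx n,
          emb (k + 1) (Fin.last k) (Uval (s - t.val) kk j) *
            ish k (G k (TY t.val i kk))) :
    G l (TY r (false, q) (false, p)) =
      ((-1 : ℂ) ^ r) • ((2⁻¹ : ℂ) •
        (chainProdDec n l r p q + σT (chainProdDec n l r p q))) ∧
    G l (TY r (true, q) (false, p)) =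
      ((-1 : ℂ) ^ r) • ((2⁻¹ : ℂ) •
        (chainProdDec n l r p q - σT (chainProdDec n l r p q))) := by
  have heq {ε : ℂ} (hε : ε * ε = 1) :
      (-1 : ℂ) ^ r • (G l (TY r (false, q) (false, p)) + ε • G l (TY r (true, q) (false, p))) =
        chainMatrix n l ε r p q := by
    rw [← mapMatrix_yangianMatrix_eq_chainMatrix hembx hembxi hishx hishxi hG1 hGstep hε hl]
    simp [yangianMatrix]
  have hσ : σT (chainProdDec n l r p q) = chainMatrix n l (-1) r p q := by
    rw [chainProdDec_eq_chainMatrix, ← mapMatrix_chainMatrix_neg hσTx hσTxi]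
    rfl
  rw [hσ, chainProdDec_eq_chainMatrix, ← heq (one_mul 1), ← heq (by norm_num : (-1 : ℂ) * -1 = 1)]
  have hsign := neg_one_pow_mul_self (M := ℂ) r
  constructor <;> match_scalars <;> grind
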